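/- For a finite complex reflection group W with exponents e_1,...,e_ℓ (where the basic invariant degrees are e_i + 1), the number of reflections in W equals e_1 + ⋯ + e_ℓ. -/

import Mathlib

open MvPolynomial

/-- A reflection in `GL_ℓ(ℂ)`: a nonidentity element fixing a hyperplane pointwise,
equivalently `g - 1` has rank one. -/
def IsReflection3 {ℓ : ℕ} (g : Matrix.GeneralLinearGroup (Fin ℓ) ℂ) : Prop :=
  (g : Matrix (Fin ℓ) (Fin ℓ) ℂ) ≠ 1 ∧ ((g : Matrix (Fin ℓ) (Fin ℓ) ℂ) - 1).rank = 1

/-- The action of a matrix `g` on polynomials, by linear substitution of the variables. -/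
noncomputable def matAct3 {ℓ : ℕ} (g : Matrix (Fin ℓ) (Fin ℓ) ℂ) :
    MvPolynomial (Fin ℓ) ℂ →ₐ[ℂ] MvPolynomial (Fin ℓ) ℂ :=
  MvPolynomial.aeval fun i => ∑ j, MvPolynomial.C (g i j) * MvPolynomial.X j

/-- The subalgebra of `W`-invariant polynomials. -/
noncomputable def invariants3 {ℓ : ℕ} (W : Subgroup (Matrix.GeneralLinearGroup (Fin ℓ) ℂ)) :
    Subalgebra ℂ (MvPolynomial (Fin ℓ) ℂ) :=
  ⨅ g ∈ W, AlgHom.equalizer (matAct3 (g : Matrix (Fin ℓ) (Fin ℓ) ℂ)) (AlgHom.id ℂ _)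

open scoped Topology

/-! ### Generating functions of weighted monomials -/

/-- The exponent vectors of weighted degree `n` with respect to the (positive) weights `d`. -/
noncomputable def weightFinset {ℓ : ℕ} (d : Fin ℓ → ℕ) (n : ℕ) : Finset (Fin ℓ →₀ ℕ) :=
  (Finset.Iic (Finsupp.equivFunOnFinite.symm fun _ => n)).filter fun a => Finsupp.weight d a = n

lemma mem_weightFinset {ℓ : ℕ} {d : Fin ℓ → ℕ} (hd : ∀ i, d i ≠ 0) {n : ℕ}
    {a : Fin ℓ →₀ ℕ} : a ∈ weightFinset d n ↔ Finsupp.weight d a = n := by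
  simp only [weightFinset, Finset.mem_filter, Finset.mem_Iic, and_iff_right_iff_imp]
  rintro rfl i
  exact Finsupp.le_weight d (hd i) a

/-- The power series `1 / (1 - c X ^ d)`. -/
noncomputable def geomSeries (c : ℂ) (d : ℕ) : PowerSeries ℂ :=
  PowerSeries.mk fun m => if d ∣ m then c ^ (m / d) else 0

lemma geomSeries_mul (c : ℂ) {d : ℕ} (hd : d ≠ 0) :
    geomSeries c d * (1 - PowerSeries.C c * PowerSeries.X ^ d) = 1 := by
  ext m
  rw [mul_sub, mul_one, mul_left_comm, map_sub, PowerSeries.coeff_C_mul,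
    PowerSeries.coeff_mul_X_pow', PowerSeries.coeff_one]
  simp only [geomSeries, PowerSeries.coeff_mk]
  by_cases hm : m = 0
  · subst hm
    simp [hd]
  · by_cases hdm : d ∣ m
    · obtain ⟨k, rfl⟩ := hdm
      obtain _ | k := k
      · simp at hm
      · have h1 : d * (k + 1) - d = d * k := by rw [mul_add, mul_one, Nat.add_sub_cancel]
        have h2 : d ≤ d * (k + 1) := Nat.le_mul_of_pos_right d k.succ_pos
        simp [h1, h2, Nat.mul_div_cancel_left _ (Nat.pos_of_ne_zero hd), hd, pow_succ']
    · have : ¬ (d ≤ m ∧ d ∣ m - d) := fun h => hdm ((Nat.dvd_sub_iff_left h.1 dvd_rfl).1 h.2)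
      by_cases hle : d ≤ m
      · have : ¬ d ∣ m - d := fun h => this ⟨hle, h⟩
        simp [hdm, hm, this]
      · simp [hdm, hm, hle]

lemma coeff_prod_geomSeries {ℓ : ℕ} (c : Fin ℓ → ℂ) {d : Fin ℓ → ℕ} (hd : ∀ i, d i ≠ 0) (n : ℕ) :
    PowerSeries.coeff n (∏ i, geomSeries (c i) (d i)) =
      ∑ a ∈ weightFinset d n, ∏ i, c i ^ a i := by
  rw [PowerSeries.coeff_prod]
  symm
  refine Finset.sum_of_injOn
    (fun a => Finsupp.equivFunOnFinite.symm fun i => d i * a i) ?_ ?_ ?_ ?_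
  · intro a _ b _ hab
    ext i
    have := DFunLike.congr_fun hab i
    simpa [hd i] using this
  · intro a ha
    rw [Finset.mem_coe, mem_weightFinset hd, Finsupp.weight_eq_sum] at ha
    simp [← ha, mul_comm]
  · intro l hl hl'
    by_cases h : ∀ i, d i ∣ l i
    · refine absurd ⟨Finsupp.equivFunOnFinite.symm fun i => l i / d i, ?_, ?_⟩ hl'
      · rw [Finset.mem_coe, mem_weightFinset hd, Finsupp.weight_eq_sum]
        rw [Finset.mem_finsuppAntidiag] at hl
        rw [← hl.1]
        exact Finset.sum_congr rfl fun i _ => by simp [Nat.div_mul_cancel (h i)]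
      · ext i
        simp [Nat.mul_div_cancel' (h i)]
    · push Not at h
      obtain ⟨i, hi⟩ := h
      exact Finset.prod_eq_zero (Finset.mem_univ i) (by simp [geomSeries, hi])
  · intro a _
    refine Finset.prod_congr rfl fun i _ => ?_
    simp [geomSeries, Nat.mul_div_cancel_left _ (Nat.pos_of_ne_zero (hd i))]

/-! ### Monomials in homogeneous algebraically independent polynomials -/

lemma isHomogeneous_aeval_monomial {ℓ : ℕ} {f : Fin ℓ → MvPolynomial (Fin ℓ) ℂ} {d : Fin ℓ → ℕ}
    (hf : ∀ i, (f i).IsHomogeneous (d i)) (a : Fin ℓ →₀ ℕ) :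
    (aeval f (monomial a (1 : ℂ))).IsHomogeneous (Finsupp.weight d a) := by
  rw [aeval_monomial, map_one, one_mul, Finsupp.weight_eq_sum,
    Finsupp.prod_fintype _ _ fun _ => pow_zero _]
  refine IsHomogeneous.prod _ _ _ fun i _ => ?_
  simpa [mul_comm] using (hf i).pow (a i)

lemma linearIndependent_aeval_monomial {ℓ : ℕ} {f : Fin ℓ → MvPolynomial (Fin ℓ) ℂ}
    (hf : AlgebraicIndependent ℂ f) :
    LinearIndependent ℂ fun a : Fin ℓ →₀ ℕ => aeval f (monomial a (1 : ℂ)) := by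
  have h := (basisMonomials (Fin ℓ) ℂ).linearIndependent.map' (aeval f).toLinearMap
    (LinearMap.ker_eq_bot.2 hf)
  simpa [Function.comp_def] using h

lemma span_aeval_monomial {ℓ : ℕ} {f : Fin ℓ → MvPolynomial (Fin ℓ) ℂ} {d : Fin ℓ → ℕ}
    (hd : ∀ i, d i ≠ 0) (hf : ∀ i, (f i).IsHomogeneous (d i)) (n : ℕ) :
    Submodule.span ℂ (Set.range fun a : weightFinset d n => aeval f (monomial a.1 (1 : ℂ))) =
      Subalgebra.toSubmodule (Algebra.adjoin ℂ (Set.range f)) ⊓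
        homogeneousSubmodule (Fin ℓ) ℂ n := by
  apply le_antisymm
  · rw [Submodule.span_le]
    rintro _ ⟨⟨a, ha⟩, rfl⟩
    refine ⟨?_, ?_⟩
    · rw [Algebra.adjoin_range_eq_range_aeval]
      exact ⟨_, rfl⟩
    · rw [mem_weightFinset hd] at ha
      exact ha ▸ isHomogeneous_aeval_monomial hf a
  · rintro p ⟨hp, hn⟩
    rw [Algebra.adjoin_range_eq_range_aeval] at hp
    obtain ⟨q, hq⟩ := hp
    change aeval f q = p at hq
    rw [← homogeneousComponent_eq_self hn, ← hq, q.as_sum, map_sum, map_sum]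
    refine Submodule.sum_mem _ fun a _ => ?_
    have : monomial a (coeff a q) = coeff a q • monomial a (1 : ℂ) := by
      rw [smul_monomial, smul_eq_mul, mul_one]
    rw [this, map_smul, map_smul]
    refine Submodule.smul_mem _ _ ?_
    rw [homogeneousComponent_of_mem (isHomogeneous_aeval_monomial hf a)]
    split_ifs with h
    · exact Submodule.subset_span ⟨⟨a, (mem_weightFinset hd).2 h.symm⟩, rfl⟩
    · exact Submodule.zero_mem _

lemma finrank_adjoin_inf_homogeneous {ℓ : ℕ} {f : Fin ℓ → MvPolynomial (Fin ℓ) ℂ}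
    {d : Fin ℓ → ℕ} (hd : ∀ i, d i ≠ 0) (hf : ∀ i, (f i).IsHomogeneous (d i))
    (hindep : AlgebraicIndependent ℂ f) (n : ℕ) :
    Module.finrank ℂ ↥(Subalgebra.toSubmodule (Algebra.adjoin ℂ (Set.range f)) ⊓
      homogeneousSubmodule (Fin ℓ) ℂ n) = (weightFinset d n).card := by
  rw [← span_aeval_monomial hd hf, finrank_span_eq_card, Fintype.card_coe]
  exact (linearIndependent_aeval_monomial hindep).comp _ Subtype.val_injective

/-- The monomials of degree `n` form a basis of the homogeneous polynomials of degree `n`. -/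
noncomputable def homogeneousBasis (ℓ n : ℕ) :
    Module.Basis (weightFinset (fun _ : Fin ℓ => 1) n) ℂ (homogeneousSubmodule (Fin ℓ) ℂ n) :=
  (Module.Basis.span ((linearIndependent_aeval_monomial (algebraicIndependent_X (Fin ℓ) ℂ)).comp _
    Subtype.val_injective)).map (LinearEquiv.ofEq _ _ (by
      refine (span_aeval_monomial (fun _ => one_ne_zero) (fun i => isHomogeneous_X ℂ i) n).trans ?_
      rw [adjoin_range_X]
      simp))

lemma coe_homogeneousBasis (ℓ n : ℕ) (a : weightFinset (fun _ : Fin ℓ => 1) n) :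
    (homogeneousBasis ℓ n a : MvPolynomial (Fin ℓ) ℂ) = monomial a.1 1 := by
  rw [homogeneousBasis, Module.Basis.map_apply, LinearEquiv.coe_ofEq_apply,
    Module.Basis.span_apply]
  simp

/-! ### The action on homogeneous polynomials and its trace -/

lemma matAct3_comp {ℓ : ℕ} (g h : Matrix (Fin ℓ) (Fin ℓ) ℂ) (p : MvPolynomial (Fin ℓ) ℂ) :
    matAct3 g (matAct3 h p) = matAct3 (h * g) p := by
  suffices (matAct3 g).comp (matAct3 h) = matAct3 (h * g) from DFunLike.congr_fun this p
  ext1 i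
  simp only [matAct3, AlgHom.comp_apply, aeval_X, map_sum, map_mul, algHom_C, algebraMap_eq,
    Matrix.mul_apply, Finset.mul_sum, Finset.sum_mul]
  rw [Finset.sum_comm]
  simp only [mul_assoc]

lemma matAct3_one {ℓ : ℕ} : matAct3 (1 : Matrix (Fin ℓ) (Fin ℓ) ℂ) = AlgHom.id ℂ _ := by
  ext1 i
  simp [matAct3, Matrix.one_apply]

lemma matAct3_diagonal_monomial {ℓ : ℕ} (c : Fin ℓ → ℂ) (a : Fin ℓ →₀ ℕ) :
    matAct3 (Matrix.diagonal c) (monomial a 1) = (∏ i, c i ^ a i) • monomial a 1 := by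
  have h (i : Fin ℓ) : ∑ j, C (Matrix.diagonal c i j) * X j = (C (c i) * X i :
      MvPolynomial (Fin ℓ) ℂ) := by
    rw [Finset.sum_eq_single i] <;> simp +contextual [eq_comm]
  rw [matAct3, aeval_monomial, map_one, one_mul, Finsupp.prod_fintype _ _ fun _ => pow_zero _]
  simp only [h, mul_pow, Finset.prod_mul_distrib]
  rw [monomial_eq, Finsupp.prod_fintype _ _ fun _ => pow_zero _, smul_eq_C_mul]
  simp

lemma matAct3_mem_homogeneousSubmodule {ℓ : ℕ} (g : Matrix (Fin ℓ) (Fin ℓ) ℂ) (n : ℕ) :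
    ∀ p ∈ homogeneousSubmodule (Fin ℓ) ℂ n,
      (matAct3 g).toLinearMap p ∈ homogeneousSubmodule (Fin ℓ) ℂ n := by
  intro p hp
  have h := IsHomogeneous.aeval (n := 1) hp (fun i => ∑ j, C (g i j) * X j) fun i =>
    IsHomogeneous.sum _ _ _ fun j _ => isHomogeneous_C_mul_X _ _
  rwa [one_mul] at h

/-- The action of a matrix on the homogeneous polynomials of degree `n`. -/
noncomputable def homAct {ℓ : ℕ} (n : ℕ) (g : Matrix (Fin ℓ) (Fin ℓ) ℂ) :
    Module.End ℂ (homogeneousSubmodule (Fin ℓ) ℂ n) :=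
  (matAct3 g).toLinearMap.restrict (matAct3_mem_homogeneousSubmodule g n)

lemma coe_homAct {ℓ n : ℕ} (g : Matrix (Fin ℓ) (Fin ℓ) ℂ)
    (p : homogeneousSubmodule (Fin ℓ) ℂ n) :
    (homAct n g p : MvPolynomial (Fin ℓ) ℂ) = matAct3 g p := rfl

lemma homAct_mul {ℓ : ℕ} (n : ℕ) (g h : Matrix (Fin ℓ) (Fin ℓ) ℂ) :
    homAct n (g * h) = homAct n h * homAct n g := by
  refine LinearMap.ext fun p => Subtype.ext ?_
  simp [coe_homAct, matAct3_comp]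

lemma homAct_one {ℓ : ℕ} (n : ℕ) : homAct n (1 : Matrix (Fin ℓ) (Fin ℓ) ℂ) = 1 := by
  refine LinearMap.ext fun p => Subtype.ext ?_
  simp [coe_homAct, matAct3_one]

lemma trace_homAct_diagonal {ℓ : ℕ} (n : ℕ) (c : Fin ℓ → ℂ) :
    LinearMap.trace ℂ (homogeneousSubmodule (Fin ℓ) ℂ n) (homAct n (Matrix.diagonal c)) =
      PowerSeries.coeff n (∏ i, geomSeries (c i) 1) := by
  rw [coeff_prod_geomSeries c fun _ => one_ne_zero,
    LinearMap.trace_eq_matrix_trace ℂ (homogeneousBasis ℓ n), Matrix.trace,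
    ← Finset.sum_coe_sort (weightFinset _ n)]
  refine Fintype.sum_congr _ _ fun a => ?_
  have h : (homAct n (Matrix.diagonal c)) (homogeneousBasis ℓ n a) =
      (∏ i, c i ^ a.1 i) • homogeneousBasis ℓ n a := by
    refine Subtype.ext ?_
    rw [coe_homAct, Submodule.coe_smul, coe_homogeneousBasis, matAct3_diagonal_monomial]
  rw [Matrix.diag_apply, LinearMap.toMatrix_apply, h]
  simp

/-- `c` lists the eigenvalues of a diagonalizable matrix `g`. -/
def HasEigenlist {ℓ : ℕ} (g : Matrix (Fin ℓ) (Fin ℓ) ℂ) (c : Fin ℓ → ℂ) : Prop :=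
  ∃ P Q : Matrix (Fin ℓ) (Fin ℓ) ℂ, P * Q = 1 ∧ Q * P = 1 ∧ g = P * Matrix.diagonal c * Q

lemma HasEigenlist.trace_homAct {ℓ : ℕ} {g : Matrix (Fin ℓ) (Fin ℓ) ℂ} {c : Fin ℓ → ℂ}
    (h : HasEigenlist g c) (n : ℕ) :
    LinearMap.trace ℂ (homogeneousSubmodule (Fin ℓ) ℂ n) (homAct n g) =
      PowerSeries.coeff n (∏ i, geomSeries (c i) 1) := by
  obtain ⟨P, Q, -, hQP, rfl⟩ := h
  rw [homAct_mul, LinearMap.trace_mul_comm, homAct_mul, mul_assoc, ← homAct_mul, hQP, homAct_one,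
    mul_one, trace_homAct_diagonal]

lemma HasEigenlist.det {ℓ : ℕ} {g : Matrix (Fin ℓ) (Fin ℓ) ℂ} {c : Fin ℓ → ℂ}
    (h : HasEigenlist g c) : g.det = ∏ i, c i := by
  obtain ⟨P, Q, hPQ, -, rfl⟩ := h
  have := congrArg Matrix.det hPQ
  rw [Matrix.det_mul, Matrix.det_one] at this
  rw [Matrix.det_mul, Matrix.det_mul, Matrix.det_diagonal, mul_right_comm, this, one_mul]

lemma HasEigenlist.rank_sub_one {ℓ : ℕ} {g : Matrix (Fin ℓ) (Fin ℓ) ℂ} {c : Fin ℓ → ℂ}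
    (h : HasEigenlist g c) : (g - 1).rank = Fintype.card {i // c i ≠ 1} := by
  obtain ⟨P, Q, hPQ, hQP, rfl⟩ := h
  have key : P * Matrix.diagonal c * Q - 1 = P * Matrix.diagonal (fun i => c i - 1) * Q := by
    rw [← Matrix.diagonal_sub, Matrix.diagonal_one, mul_sub, sub_mul, mul_one, hPQ]
  rw [key, Matrix.rank_mul_eq_left_of_isUnit_det _ _ (Matrix.isUnit_det_of_left_inverse hPQ),
    Matrix.rank_mul_eq_right_of_isUnit_det _ _ (Matrix.isUnit_det_of_left_inverse hQP),
    Matrix.rank_diagonal]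
  simp only [ne_eq, sub_eq_zero]

lemma exists_hasEigenlist {ℓ : ℕ} (g : Matrix (Fin ℓ) (Fin ℓ) ℂ) {m : ℕ} (hm : m ≠ 0)
    (hg : g ^ m = 1) : ∃ c, HasEigenlist g c := by
  set T : Module.End ℂ (Fin ℓ → ℂ) := Matrix.toLin' g with hT
  have hTm : T ^ m = 1 := by rw [hT, ← Matrix.toLin'_pow, hg, Matrix.toLin'_one]; rfl
  have hss : T.IsSemisimple := by
    refine Module.End.isSemisimple_of_squarefree_aeval_eq_zero (p := Polynomial.X ^ m - 1) ?_ ?_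
    · exact (Polynomial.separable_X_pow_sub_C (1 : ℂ) (by exact_mod_cast hm) one_ne_zero).squarefree
    · simp [hTm]
  have htop := hss.iSup_eigenspace_eq_top
  have hspan : Submodule.span ℂ {v | ∃ μ : ℂ, T v = μ • v} = ⊤ := by
    rw [eq_top_iff, ← htop, iSup_le_iff]
    intro μ v hv
    exact Submodule.subset_span ⟨μ, Module.End.mem_eigenspace_iff.1 hv⟩
  obtain ⟨t, ht, htspan, hli⟩ := exists_linearIndependent ℂ {v | ∃ μ : ℂ, T v = μ • v}
  let b := Module.Basis.mk hli (by simp [htspan, hspan])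
  let e : t ≃ Fin ℓ := b.indexEquiv (Pi.basisFun ℂ (Fin ℓ))
  let b' := b.reindex e
  have hb (i : Fin ℓ) : ∃ μ : ℂ, T (b' i) = μ • b' i := by
    simpa [b', b] using ht (e.symm i).2
  choose c hc using hb
  refine ⟨c, (Pi.basisFun ℂ (Fin ℓ)).toMatrix b', b'.toMatrix (Pi.basisFun ℂ (Fin ℓ)),
    Module.Basis.toMatrix_mul_toMatrix_flip _ _, Module.Basis.toMatrix_mul_toMatrix_flip _ _, ?_⟩
  have hdiag : Matrix.diagonal c = LinearMap.toMatrix b' b' T := by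
    ext i j
    rw [LinearMap.toMatrix_apply, hc, Matrix.diagonal_apply]
    by_cases h : i = j
    · subst h
      simp
    · simp [h]
  rw [hdiag, basis_toMatrix_mul_linearMap_toMatrix_mul_basis_toMatrix]
  simp [hT, LinearMap.toMatrix_eq_toMatrix']

/-! ### Molien's formula -/

lemma mem_invariants3 {ℓ : ℕ} {W : Subgroup (Matrix.GeneralLinearGroup (Fin ℓ) ℂ)}
    {p : MvPolynomial (Fin ℓ) ℂ} :
    p ∈ invariants3 W ↔ ∀ g ∈ W, matAct3 (g : Matrix (Fin ℓ) (Fin ℓ) ℂ) p = p := by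
  simp [invariants3, Algebra.mem_iInf, AlgHom.mem_equalizer]

lemma sum_trace_eq_card_mul_finrank {G V : Type*} [Group G] [Fintype G] [AddCommGroup V]
    [Module ℂ V] [FiniteDimensional ℂ V] {ρ : G → Module.End ℂ V}
    (hρ : ∀ g h, ρ (g * h) = ρ h * ρ g) {U : Submodule ℂ V}
    (hU : ∀ v, v ∈ U ↔ ∀ g, ρ g v = v) :
    ∑ g, LinearMap.trace ℂ V (ρ g) = Fintype.card G * (Module.finrank ℂ U : ℂ) := by
  have hG : (Fintype.card G : ℂ) ≠ 0 := by exact_mod_cast Fintype.card_ne_zero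
  have hproj : LinearMap.IsProj U ((Fintype.card G : ℂ)⁻¹ • ∑ g, ρ g) := by
    refine ⟨fun v => ?_, fun v hv => ?_⟩
    · rw [hU]
      intro h
      simp only [LinearMap.smul_apply, LinearMap.sum_apply, map_smul, map_sum]
      congr 1
      refine Fintype.sum_equiv (Equiv.mulRight h) _ _ fun g => ?_
      rw [Equiv.coe_mulRight, hρ, Module.End.mul_apply]
    · rw [hU] at hv
      simp [hv, ← Nat.cast_smul_eq_nsmul ℂ, smul_smul, hG]
  have htr := hproj.trace
  rwa [map_smul, map_sum, smul_eq_mul, inv_mul_eq_iff_eq_mul₀ hG] at htr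

lemma sum_trace_homAct {ℓ : ℕ} (W : Subgroup (Matrix.GeneralLinearGroup (Fin ℓ) ℂ)) [Fintype W]
    (n : ℕ) :
    ∑ g : W, LinearMap.trace ℂ (homogeneousSubmodule (Fin ℓ) ℂ n)
        (homAct n (g.1 : Matrix (Fin ℓ) (Fin ℓ) ℂ)) =
      Fintype.card W * (Module.finrank ℂ ↥(Subalgebra.toSubmodule (invariants3 W) ⊓
        homogeneousSubmodule (Fin ℓ) ℂ n) : ℂ) := by
  have : Module.Finite ℂ (homogeneousSubmodule (Fin ℓ) ℂ n) :=
    Module.Finite.of_basis (homogeneousBasis ℓ n)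
  rw [sum_trace_eq_card_mul_finrank
    (U := (Subalgebra.toSubmodule (invariants3 W)).comap (homogeneousSubmodule (Fin ℓ) ℂ n).subtype)
    (fun g h => homAct_mul n _ _) fun p => ?_, ← Submodule.finrank_map_subtype_eq,
    Submodule.map_comap_subtype, inf_comm]
  simp only [Submodule.mem_comap, Submodule.subtype_apply, Subalgebra.mem_toSubmodule,
    mem_invariants3, Subtype.forall, Subtype.ext_iff, coe_homAct]

lemma sum_prod_geomSeries {ℓ : ℕ} (W : Subgroup (Matrix.GeneralLinearGroup (Fin ℓ) ℂ)) [Fintype W]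
    {f : Fin ℓ → MvPolynomial (Fin ℓ) ℂ} {d : Fin ℓ → ℕ} (hd : ∀ i, d i ≠ 0)
    (hhom : ∀ i, (f i).IsHomogeneous (d i)) (hindep : AlgebraicIndependent ℂ f)
    (hadj : Algebra.adjoin ℂ (Set.range f) = invariants3 W) {c : W → Fin ℓ → ℂ}
    (hc : ∀ g : W, HasEigenlist (g.1 : Matrix (Fin ℓ) (Fin ℓ) ℂ) (c g)) :
    ∑ g, ∏ i, geomSeries (c g i) 1 =
      PowerSeries.C (Fintype.card W : ℂ) * ∏ i, geomSeries 1 (d i) := by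
  ext n
  rw [PowerSeries.coeff_C_mul, coeff_prod_geomSeries _ hd, map_sum]
  simp only [← (hc _).trace_homAct, sum_trace_homAct]
  rw [← hadj, finrank_adjoin_inf_homogeneous hd hhom hindep]
  simp

lemma sum_inv_eval_eq_of_powerSeries {ι : Type*} [Fintype ι] {Q : ι → Polynomial ℂ}
    {R : Polynomial ℂ} {A : ι → PowerSeries ℂ} {B : PowerSeries ℂ} {N : ℂ}
    (hA : ∀ g, A g * Q g = 1) (hB : B * R = 1) (h : ∑ g, A g = PowerSeries.C N * B) {t : ℂ}
    (hQ : ∀ g, (Q g).eval t ≠ 0) (hR : R.eval t ≠ 0) :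
    ∑ g, ((Q g).eval t)⁻¹ = N * (R.eval t)⁻¹ := by
  classical
  have key : R * ∑ g, ∏ k ∈ Finset.univ.erase g, Q k = Polynomial.C N * ∏ k, Q k := by
    apply Polynomial.coe_injective
    have h1 (g : ι) : ((∏ k ∈ Finset.univ.erase g, Q k : Polynomial ℂ) : PowerSeries ℂ) =
        A g * ((∏ k, Q k : Polynomial ℂ) : PowerSeries ℂ) := by
      rw [← Finset.mul_prod_erase _ Q (Finset.mem_univ g), Polynomial.coe_mul, ← mul_assoc, hA,
        one_mul]
    have h2 : ((∑ g, ∏ k ∈ Finset.univ.erase g, Q k : Polynomial ℂ) : PowerSeries ℂ) =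
        ∑ g, A g * ((∏ k, Q k : Polynomial ℂ) : PowerSeries ℂ) := by
      rw [← Polynomial.coeToPowerSeries.ringHom_apply, map_sum]
      exact Finset.sum_congr rfl fun g _ => h1 g
    rw [Polynomial.coe_mul, Polynomial.coe_mul, h2, ← Finset.sum_mul, h, Polynomial.coe_C]
    linear_combination (PowerSeries.C N * ((∏ k, Q k : Polynomial ℂ) : PowerSeries ℂ)) * hB
  have hev := congrArg (Polynomial.eval t) key
  rw [Polynomial.eval_mul, Polynomial.eval_mul, Polynomial.eval_C, Polynomial.eval_finsetSum,
    Polynomial.eval_prod] at hev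
  have h3 (g : ι) : (∏ k ∈ Finset.univ.erase g, Q k).eval t =
      ((Q g).eval t)⁻¹ * ∏ k, (Q k).eval t := by
    rw [← Finset.mul_prod_erase _ _ (Finset.mem_univ g), inv_mul_cancel_left₀ (hQ g),
      Polynomial.eval_prod]
  simp only [h3, ← Finset.sum_mul] at hev
  have h4 : ∏ k, (Q k).eval t ≠ 0 := Finset.prod_ne_zero_iff.2 fun k _ => hQ k
  rw [← mul_assoc] at hev
  have := mul_right_cancel₀ h4 hev
  rw [← this, mul_comm, inv_mul_cancel_left₀ hR]

lemma sum_prod_inv_one_sub {ι : Type*} [Fintype ι] {ℓ : ℕ} {c : ι → Fin ℓ → ℂ} {d : Fin ℓ → ℕ}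
    (hd : ∀ i, d i ≠ 0) {N : ℂ}
    (h : ∑ g, ∏ i, geomSeries (c g i) 1 = PowerSeries.C N * ∏ i, geomSeries 1 (d i)) {t : ℂ}
    (hc : ∀ g i, 1 - c g i * t ≠ 0) (ht : ∀ i, 1 - t ^ d i ≠ 0) :
    ∑ g, ∏ i, (1 - c g i * t)⁻¹ = N * ∏ i, (1 - t ^ d i)⁻¹ := by
  have key := sum_inv_eval_eq_of_powerSeries (t := t)
    (Q := fun g => ∏ i, (1 - Polynomial.C (c g i) * Polynomial.X))
    (R := ∏ i, (1 - Polynomial.X ^ d i)) (fun g => ?_) ?_ h (fun g => ?_) ?_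
  · simpa [Polynomial.eval_prod] using key
  · rw [← Polynomial.coeToPowerSeries.ringHom_apply, map_prod, ← Finset.prod_mul_distrib]
    refine Finset.prod_eq_one fun i _ => ?_
    simpa using geomSeries_mul (c g i) one_ne_zero
  · rw [← Polynomial.coeToPowerSeries.ringHom_apply, map_prod, ← Finset.prod_mul_distrib]
    refine Finset.prod_eq_one fun i _ => ?_
    simpa using geomSeries_mul 1 (hd i)
  · simpa [Polynomial.eval_prod, Finset.prod_eq_zero_iff] using hc g
  · simpa [Polynomial.eval_prod, Finset.prod_eq_zero_iff] using ht

/-! ### Comparison of the expansions at `t = 1` -/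

/-- The rational function `(1 - t) / (1 - c t)`, extended continuously to `t = 1`. -/
noncomputable def ratioFun (c t : ℂ) : ℂ := if c = 1 then 1 else (1 - t) * (1 - c * t)⁻¹

lemma ratioFun_one_right (c : ℂ) : ratioFun c 1 = if c = 1 then 1 else 0 := by
  simp [ratioFun]

lemma ratioFun_of_ne_one (c : ℂ) {t : ℂ} (ht : t ≠ 1) :
    ratioFun c t = (1 - t) * (1 - c * t)⁻¹ := by
  by_cases hc : c = 1
  · simp [ratioFun, hc, sub_ne_zero.2 ht.symm]
  · simp [ratioFun, hc]

lemma hasDerivAt_ratioFun (c : ℂ) :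
    HasDerivAt (ratioFun c) (if c = 1 then 0 else -(1 - c)⁻¹) 1 := by
  by_cases hc : c = 1
  · have : ratioFun c = fun _ => 1 := by ext t; simp [ratioFun, hc]
    rw [this, if_pos hc]
    exact hasDerivAt_const (1 : ℂ) (1 : ℂ)
  · have : ratioFun c = fun t => (1 - t) * (1 - c * t)⁻¹ := by ext t; simp [ratioFun, hc]
    have h0 : (1 : ℂ) - c * 1 ≠ 0 := by
      rw [mul_one]
      exact sub_ne_zero.2 (Ne.symm hc)
    rw [this, if_neg hc]
    have h1 : HasDerivAt (fun t : ℂ => 1 - t) (-1) 1 := (hasDerivAt_id (1 : ℂ)).const_sub 1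
    have h2 : HasDerivAt (fun t : ℂ => 1 - c * t) (-(c * 1)) 1 :=
      ((hasDerivAt_id (1 : ℂ)).const_mul c).const_sub 1
    refine (h1.fun_mul (h2.fun_inv h0)).congr_deriv ?_
    simp

lemma prod_ratioFun_one {ℓ : ℕ} (c : Fin ℓ → ℂ) :
    ∏ i, ratioFun (c i) 1 = if ∀ i, c i = 1 then 1 else 0 := by
  simp only [ratioFun_one_right]
  split_ifs with h
  · simp [h]
  · push Not at h
    obtain ⟨i, hi⟩ := h
    exact Finset.prod_eq_zero (Finset.mem_univ i) (by simp [hi])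

lemma hasDerivAt_prod_ratioFun {ℓ : ℕ} (c : Fin ℓ → ℂ) :
    HasDerivAt (fun t => ∏ i, ratioFun (c i) t)
      (if Fintype.card {i // c i ≠ 1} = 1 then -(1 - ∏ i, c i)⁻¹ else 0) 1 := by
  have h := HasDerivAt.fun_finsetProd (u := Finset.univ) fun i _ => hasDerivAt_ratioFun (c i)
  refine h.congr_deriv ?_
  simp only [ratioFun_one_right, smul_eq_mul]
  split_ifs with hcard
  · obtain ⟨⟨i, hi⟩, hu⟩ := Fintype.card_eq_one_iff.1 hcard
    have hj (j : Fin ℓ) (hji : j ≠ i) : c j = 1 := by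
      by_contra hne
      exact hji (congrArg Subtype.val (hu ⟨j, hne⟩))
    rw [Finset.sum_eq_single i (fun j _ hji => by simp [hj j hji]) (by simp),
      Finset.prod_eq_one fun j hji => if_pos (hj j (Finset.ne_of_mem_erase hji)),
      Finset.prod_eq_single i (fun j _ hji => hj j hji) (by simp), if_neg hi, one_mul]
  · refine Finset.sum_eq_zero fun i _ => ?_
    by_cases hi : c i = 1
    · simp [hi]
    · have : ∃ j, j ≠ i ∧ c j ≠ 1 := by
        by_contra! hall
        refine hcard (Fintype.card_eq_one_iff.2 ⟨⟨i, hi⟩, fun ⟨j, hj⟩ => Subtype.ext ?_⟩)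
        by_contra hji
        exact hj (hall j hji)
      obtain ⟨j, hji, hj⟩ := this
      rw [Finset.prod_eq_zero (Finset.mem_erase.2 ⟨hji, Finset.mem_univ j⟩) (if_neg hj), zero_mul]

lemma hasDerivAt_inv_geom_sum (e : ℕ) :
    HasDerivAt (fun t : ℂ => (∑ k ∈ Finset.range (e + 1), t ^ k)⁻¹)
      (((e + 1 : ℕ) : ℂ)⁻¹ * -(e / 2)) 1 := by
  have h1 : HasDerivAt (fun t : ℂ => ∑ k ∈ Finset.range (e + 1), t ^ k)
      (∑ k ∈ Finset.range (e + 1), (k : ℂ) * 1 ^ (k - 1)) 1 :=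
    HasDerivAt.fun_sum fun k _ => hasDerivAt_pow k 1
  have h0 : ((e : ℂ) + 1) ≠ 0 := by exact_mod_cast e.succ_ne_zero
  refine (h1.inv (by simpa using h0)).congr_deriv ?_
  have h2 : (∑ k ∈ Finset.range (e + 1), (k : ℂ)) * 2 = (e + 1) * e := by
    have := Finset.sum_range_id_mul_two (e + 1)
    rw [Nat.add_sub_cancel] at this
    simpa using congrArg (Nat.cast : ℕ → ℂ) this
  have h3 : (∑ k ∈ Finset.range (e + 1), (k : ℂ)) = (e + 1) * e / 2 := by
    rw [← h2, mul_div_cancel_right₀ _ two_ne_zero]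
  simp only [one_pow, mul_one, Finset.sum_const, Finset.card_range, nsmul_eq_mul, Nat.cast_add,
    Nat.cast_one, h3]
  field_simp

lemma hasDerivAt_prod_inv_geom_sum {ℓ : ℕ} (e : Fin ℓ → ℕ) :
    HasDerivAt (fun t : ℂ => ∏ i, (∑ k ∈ Finset.range (e i + 1), t ^ k)⁻¹)
      ((∏ i, ((e i + 1 : ℕ) : ℂ)⁻¹) * -((∑ i, e i : ℕ) / 2)) 1 := by
  refine (HasDerivAt.fun_finsetProd (u := Finset.univ)
    fun i _ => hasDerivAt_inv_geom_sum (e i)).congr_deriv ?_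
  rw [Nat.cast_sum, Finset.sum_div, ← Finset.sum_neg_distrib, Finset.mul_sum]
  refine Finset.sum_congr rfl fun i _ => ?_
  rw [← Finset.mul_prod_erase _ _ (Finset.mem_univ i)]
  simp
  ring

/-- The first two terms at `t = 1` of a Molien-type identity. -/
lemma value_and_deriv_of_molien {ι : Type*} [Fintype ι] {ℓ : ℕ} {c : ι → Fin ℓ → ℂ}
    {e : Fin ℓ → ℕ} {N : ℂ}
    (h : ∑ g, ∏ i, geomSeries (c g i) 1 = PowerSeries.C N * ∏ i, geomSeries 1 (e i + 1)) :
    (∑ g, if ∀ i, c g i = 1 then (1 : ℂ) else 0) = N * ∏ i, ((e i + 1 : ℕ) : ℂ)⁻¹ ∧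
    (∑ g, if Fintype.card {i // c g i ≠ 1} = 1 then -(1 - ∏ i, c g i)⁻¹ else 0) =
      N * ((∏ i, ((e i + 1 : ℕ) : ℂ)⁻¹) * -((∑ i, e i : ℕ) / 2)) := by
  have hF : HasDerivAt (fun t => ∑ g, ∏ i, ratioFun (c g i) t) _ 1 :=
    HasDerivAt.fun_sum fun g _ => hasDerivAt_prod_ratioFun (c g)
  have hG := (hasDerivAt_prod_inv_geom_sum e).const_mul N
  have hc (g : ι) (i : Fin ℓ) : ∀ᶠ t in 𝓝[≠] (1 : ℂ), 1 - c g i * t ≠ 0 := by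
    by_cases hgi : c g i = 1
    · filter_upwards [self_mem_nhdsWithin] with t ht
      rw [hgi, one_mul]
      exact sub_ne_zero.2 (Ne.symm ht)
    · refine eventually_nhdsWithin_of_eventually_nhds (ContinuousAt.eventually_ne (by fun_prop) ?_)
      rw [mul_one]
      exact sub_ne_zero.2 (Ne.symm hgi)
  have hgeom (i : Fin ℓ) :
      ∀ᶠ t in 𝓝[≠] (1 : ℂ), ∑ k ∈ Finset.range (e i + 1), t ^ k ≠ 0 := by
    refine eventually_nhdsWithin_of_eventually_nhds (ContinuousAt.eventually_ne (by fun_prop) ?_)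
    simpa using Nat.cast_add_one_ne_zero (R := ℂ) (e i)
  have heq : (fun t => ∑ g, ∏ i, ratioFun (c g i) t) =ᶠ[𝓝[≠] 1]
      fun t => N * ∏ i, (∑ k ∈ Finset.range (e i + 1), t ^ k)⁻¹ := by
    filter_upwards [self_mem_nhdsWithin, Filter.eventually_all.2 fun g =>
      Filter.eventually_all.2 (hc g), Filter.eventually_all.2 hgeom] with t ht hct hgt
    have ht1 : (1 : ℂ) - t ≠ 0 := sub_ne_zero.2 (Ne.symm ht)
    have hpow (i : Fin ℓ) : 1 - t ^ (e i + 1) =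
        (1 - t) * ∑ k ∈ Finset.range (e i + 1), t ^ k := (mul_neg_geom_sum t _).symm
    have key := sum_prod_inv_one_sub (fun i => (e i).succ_ne_zero) h hct fun i => by
      rw [Nat.succ_eq_add_one, hpow]
      exact mul_ne_zero ht1 (hgt i)
    have h1 (i : Fin ℓ) : (∑ k ∈ Finset.range (e i + 1), t ^ k)⁻¹ =
        (1 - t) * (1 - t ^ (e i + 1))⁻¹ := by
      rw [hpow, mul_inv, mul_inv_cancel_left₀ ht1]
    simp only [ratioFun_of_ne_one _ ht, h1, Finset.prod_mul_distrib, ← Finset.mul_sum, key]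
    ring
  have hnhds := (hF.continuousAt.eventuallyEq_nhds_iff_eventuallyEq_nhdsNE hG.continuousAt).1 heq
  refine ⟨?_, hF.unique (hG.congr_of_eventuallyEq hnhds)⟩
  simpa [prod_ratioFun_one] using hnhds.self_of_nhds

/-! ### Counting reflections -/

lemma isReflection3_iff {ℓ : ℕ} {g : Matrix.GeneralLinearGroup (Fin ℓ) ℂ} :
    IsReflection3 g ↔ ((g : Matrix (Fin ℓ) (Fin ℓ) ℂ) - 1).rank = 1 := by
  refine ⟨And.right, fun h => ⟨fun h1 => ?_, h⟩⟩
  simp [h1] at h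

lemma IsReflection3.inv {ℓ : ℕ} {g : Matrix.GeneralLinearGroup (Fin ℓ) ℂ}
    (hg : IsReflection3 g) : IsReflection3 g⁻¹ := by
  rw [isReflection3_iff] at hg ⊢
  have h : ((g⁻¹ : Matrix.GeneralLinearGroup (Fin ℓ) ℂ) : Matrix (Fin ℓ) (Fin ℓ) ℂ) - 1 =
      ((-g⁻¹ : Matrix.GeneralLinearGroup (Fin ℓ) ℂ) : Matrix (Fin ℓ) (Fin ℓ) ℂ) *
        ((g : Matrix (Fin ℓ) (Fin ℓ) ℂ) - 1) := by
    rw [mul_sub, mul_one, Units.val_neg, neg_mul, Units.inv_mul]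
    abel
  rw [h, Matrix.rank_mul_eq_right_of_isUnit_det _ _ ((Matrix.isUnit_iff_isUnit_det _).1
    (Units.isUnit _)), hg]

lemma HasEigenlist.forall_eq_one_iff {ℓ : ℕ} {g : Matrix (Fin ℓ) (Fin ℓ) ℂ} {c : Fin ℓ → ℂ}
    (h : HasEigenlist g c) : (∀ i, c i = 1) ↔ g = 1 := by
  constructor
  · intro hc
    obtain ⟨P, Q, hPQ, -, rfl⟩ := h
    rw [show c = fun _ => 1 from funext hc, Matrix.diagonal_one, mul_one, hPQ]
  · rintro rfl
    have := h.rank_sub_one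
    rw [sub_self, Matrix.rank_zero, eq_comm, Fintype.card_eq_zero_iff, isEmpty_subtype] at this
    simpa using this

lemma HasEigenlist.det_ne_one {ℓ : ℕ} {g : Matrix (Fin ℓ) (Fin ℓ) ℂ} {c : Fin ℓ → ℂ}
    (h : HasEigenlist g c) (hg : (g - 1).rank = 1) : g.det ≠ 1 := by
  rw [h.rank_sub_one] at hg
  obtain ⟨⟨i, hi⟩, hu⟩ := Fintype.card_eq_one_iff.1 hg
  rw [h.det, Finset.prod_eq_single i (fun j _ hji => ?_) (by simp)]
  · exact hi
  · by_contra hne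
    exact hji (congrArg Subtype.val (hu ⟨j, hne⟩))

lemma exists_hasEigenlist_of_mem {ℓ : ℕ} {W : Subgroup (Matrix.GeneralLinearGroup (Fin ℓ) ℂ)}
    [Fintype W] (g : W) : ∃ c, HasEigenlist (g.1 : Matrix (Fin ℓ) (Fin ℓ) ℂ) c := by
  refine exists_hasEigenlist _ (Fintype.card_ne_zero (α := W)) ?_
  have h : (g ^ Fintype.card W).1 = 1 := by rw [pow_card_eq_one]; rfl
  exact congrArg Units.val h

lemma inv_one_sub_add_inv_one_sub_inv {x : ℂ} (h0 : x ≠ 0) (h1 : x ≠ 1) :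
    (1 - x)⁻¹ + (1 - x⁻¹)⁻¹ = 1 := by
  have h2 : 1 - x ≠ 0 := sub_ne_zero.2 h1.symm
  have h3 : x - 1 ≠ 0 := sub_ne_zero.2 h1
  have h4 : 1 - x⁻¹ = (x - 1) * x⁻¹ := by field_simp
  rw [h4, mul_inv, inv_inv, ← neg_sub x 1, inv_neg]
  field_simp
  ring

open scoped Classical in
lemma sum_inv_one_sub_det {ℓ : ℕ} (W : Subgroup (Matrix.GeneralLinearGroup (Fin ℓ) ℂ))
    [Fintype W] :
    ∑ g : W with IsReflection3 g.1, (1 - (g.1 : Matrix (Fin ℓ) (Fin ℓ) ℂ).det)⁻¹ =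
      (Finset.card {g : W | IsReflection3 g.1} : ℂ) / 2 := by
  have hinv : ∑ g : W with IsReflection3 g.1, (1 - (g.1 : Matrix (Fin ℓ) (Fin ℓ) ℂ).det)⁻¹ =
      ∑ g : W with IsReflection3 g.1, (1 - (g.1 : Matrix (Fin ℓ) (Fin ℓ) ℂ).det⁻¹)⁻¹ := by
    refine Finset.sum_bij' (fun g _ => g⁻¹) (fun g _ => g⁻¹) ?_ ?_ ?_ ?_ ?_
    · intro g hg
      simpa using IsReflection3.inv (by simpa using hg)
    · intro g hg
      simpa using IsReflection3.inv (by simpa using hg)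
    · simp
    · simp
    · intro g _
      simp [Matrix.det_nonsing_inv]
  have hsum : ∑ g : W with IsReflection3 g.1, ((1 - (g.1 : Matrix (Fin ℓ) (Fin ℓ) ℂ).det)⁻¹ +
      (1 - (g.1 : Matrix (Fin ℓ) (Fin ℓ) ℂ).det⁻¹)⁻¹) =
      (Finset.card {g : W | IsReflection3 g.1} : ℂ) := by
    rw [Finset.cast_card]
    refine Finset.sum_congr rfl fun g hg => inv_one_sub_add_inv_one_sub_inv ?_ ?_
    · exact ((Matrix.isUnit_iff_isUnit_det _).1 (Units.isUnit g.1)).ne_zero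
    · obtain ⟨c, hc⟩ := exists_hasEigenlist_of_mem g
      exact hc.det_ne_one (isReflection3_iff.1 (Finset.mem_filter.1 hg).2)
  rw [Finset.sum_add_distrib, ← hinv, ← mul_two] at hsum
  rw [← hsum, mul_div_cancel_right₀ _ two_ne_zero]

/-- For a finite complex reflection group `W ⊆ GL_ℓ(ℂ)` with exponents
`e₁,...,e_ℓ` (so the invariant ring is a polynomial ring on algebraically independent
homogeneous generators of degrees `eᵢ + 1`), the number of reflections in `W` equals
`e₁ + ⋯ + e_ℓ`. -/
theorem stmt3 {ℓ : ℕ} (W : Subgroup (Matrix.GeneralLinearGroup (Fin ℓ) ℂ)) [Fintype W]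
    (hgen : Subgroup.closure {g | g ∈ W ∧ IsReflection3 g} = W)
    (f : Fin ℓ → MvPolynomial (Fin ℓ) ℂ) (e : Fin ℓ → ℕ)
    (hhom : ∀ i, (f i).IsHomogeneous (e i + 1))
    (hindep : AlgebraicIndependent ℂ f)
    (hadj : Algebra.adjoin ℂ (Set.range f) = invariants3 W) :
    Nat.card {g : W // IsReflection3 (g : Matrix.GeneralLinearGroup (Fin ℓ) ℂ)} = ∑ i, e i := by
  classical
  choose c hc using fun g : W => exists_hasEigenlist_of_mem g
  obtain ⟨hval, hder⟩ := value_and_deriv_of_molien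
    (sum_prod_geomSeries W (fun i => (e i).succ_ne_zero) hhom hindep hadj hc)
  have hone (g : W) : (∀ i, c g i = 1) ↔ g = 1 := by
    rw [(hc g).forall_eq_one_iff, Subtype.ext_iff]
    exact Units.val_eq_one
  simp only [hone, Finset.sum_ite_eq', Finset.mem_univ, if_true] at hval
  rw [← mul_assoc, ← hval, one_mul] at hder
  simp only [← (hc _).rank_sub_one, ← (hc _).det, ← isReflection3_iff] at hder
  rw [← Finset.sum_filter, Finset.sum_neg_distrib, neg_inj, sum_inv_one_sub_det,
    div_left_inj' two_ne_zero, Nat.cast_inj] at hder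
  rw [Nat.card_eq_fintype_card, Fintype.card_subtype, hder]
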